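/- For every c̄ ≥ 1 and every k ∈ ℕ there exists a constant C > 0 (depending only on c̄ and k) with the following property: for every compact interval [a,b], every mesh 𝒯 of [a,b] that is quasi-uniform with constant c̄, and every w ∈ 𝕊_k(𝒯) with w(a) = w(b) = 0, one has ∫_a^b ∫_a^b (w(x) − w(y))²/(x − y)² dx dy + ∫_a^b w(x)²/ρ(x) dx ≤ C · Σ_{i=1}^{r} (sup_{x ∈ e_i} |w(x)|)², where ρ(x) = min(x − a, b − x) denotes the distance of x from the nearest endpoint of [a,b]. (The left-hand side is the square of the H^{1/2}_{00} norm of w on [a,b].) -/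

import Mathlib

open MeasureTheory Set

/-!
On a single element of length at least `h`, a polynomial of degree at most `k` satisfies Markov's
inequality `|w'| ≤ K m / h`, where `m` is the supremum of `|w|` and `K` depends only on `k`: all
norms on the finite-dimensional space of such polynomials are equivalent, and the dependence on the
length is found by scaling. Put `δ = h / K` and let `q` be the step function equal to `mᵢ²` on the
`i`-th element. Since two points in different, non-adjacent elements are at distance at least `δ`,
for all `s`, `t` in elements `i`, `j`, both `|w s - w t| ≤ mᵢ + mⱼ` and
`|w s - w t| ≤ (mᵢ + mⱼ) |s - t| / δ` hold, and adding their squares gives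
`(w s - w t)² / (s - t)² ≤ 4 (q s + q t) / ((s - t)² + δ²)`.
The right-hand side is a Cauchy kernel of total mass `π / δ`, so the double integral is at most
`8 π / δ * ∫ q`. In the same way, the boundary values give `w² / ρ ≤ q / δ`. Finally `∫ q` is at
most the largest element length times `∑ mᵢ²`, and that length is comparable to `δ`.
-/

section Markov

open Polynomial

lemma exists_norm_eval_map_le {𝕜 : Type*} [NontriviallyNormedField 𝕜] [CompleteSpace 𝕜] {s : Set 𝕜}
    (hs : IsCompact s) (hinf : s.Infinite) (T : 𝕜[X] →ₗ[𝕜] 𝕜[X]) (k : ℕ) :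
    ∃ K : ℝ, ∀ p : 𝕜[X], p.natDegree ≤ k → ∀ M, (∀ x ∈ s, ‖p.eval x‖ ≤ M) →
      ∀ x ∈ s, ‖(T p).eval x‖ ≤ K * M := by
  have : CompactSpace s := isCompact_iff_compactSpace.mp hs
  let ev : 𝕜[X] →ₗ[𝕜] C(s, 𝕜) := (toContinuousMapOnAlgHom s).toLinearMap
  let V := degreeLT 𝕜 (k + 1)
  have hinj : Function.Injective (ev ∘ₗ V.subtype) := fun p q hpq =>
    Subtype.ext <| eq_of_infinite_eval_eq _ _ <| hinf.mono fun x hx =>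
      show (p : 𝕜[X]).eval x = (q : 𝕜[X]).eval x from DFunLike.congr_fun hpq ⟨x, hx⟩
  have : FiniteDimensional 𝕜 V := Module.Finite.equiv (degreeLTEquiv 𝕜 (k + 1)).symm
  let e := LinearEquiv.ofInjective _ hinj
  let D := (ev ∘ₗ T ∘ₗ V.subtype ∘ₗ e.symm.toLinearMap).toContinuousLinearMap
  refine ⟨‖D‖, fun p hp M hM x hx => ?_⟩
  have hpV : p ∈ V := mem_degreeLT.mpr (degree_le_natDegree.trans_lt (by exact_mod_cast by omega))
  have hM0 : 0 ≤ M := (norm_nonneg _).trans (hM x hx)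
  have hpM : ‖e ⟨p, hpV⟩‖ ≤ M := (ContinuousMap.norm_le _ hM0).mpr fun y => hM y y.2
  have hDp : D (e ⟨p, hpV⟩) = ev (T p) := by simp [D]
  calc ‖(T p).eval x‖ ≤ ‖D (e ⟨p, hpV⟩)‖ := hDp ▸ (ev (T p)).norm_coe_le_norm ⟨x, hx⟩
    _ ≤ ‖D‖ * M := D.le_of_opNorm_le_of_le le_rfl hpM

theorem exists_abs_eval_derivative_le (k : ℕ) :
    ∃ K : ℝ, ∀ α β : ℝ, α < β → ∀ p : ℝ[X], p.natDegree ≤ k →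
      ∀ M, (∀ x ∈ Icc α β, |p.eval x| ≤ M) →
        ∀ x ∈ Icc α β, |p.derivative.eval x| ≤ K * M / (β - α) := by
  obtain ⟨K, hunit⟩ :=
    exists_norm_eval_map_le isCompact_Icc (Icc_infinite (zero_lt_one' ℝ)) derivative k
  refine ⟨K, fun α β hαβ p hp M hM x hx => ?_⟩
  have hlen : 0 < β - α := sub_pos.mpr hαβ
  let q := p.comp (C (β - α) * X + C α)
  have hqdeg : q.natDegree ≤ k := by
    calc q.natDegree ≤ p.natDegree * 1 :=
          natDegree_comp_le.trans (Nat.mul_le_mul_left _ natDegree_linear_le)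
      _ ≤ k := by simpa using hp
  have hqM : ∀ y ∈ Icc (0 : ℝ) 1, ‖q.eval y‖ ≤ M := fun y hy => by
    have : (β - α) * y + α ∈ Icc α β := ⟨by nlinarith [hy.1], by nlinarith [hy.2]⟩
    simpa [q] using hM _ this
  have hx' : (x - α) / (β - α) ∈ Icc (0 : ℝ) 1 :=
    ⟨div_nonneg (sub_nonneg.mpr hx.1) hlen.le, (div_le_one hlen).mpr (by linarith [hx.2])⟩
  have hderiv : q.derivative.eval ((x - α) / (β - α)) = (β - α) * p.derivative.eval x := by
    simp [q, derivative_comp, mul_div_cancel₀ _ hlen.ne']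
  have := hunit q hqdeg M hqM _ hx'
  rwa [hderiv, Real.norm_eq_abs, abs_mul, abs_of_pos hlen, mul_comm, ← le_div_iff₀ hlen] at this

theorem exists_abs_eval_sub_eval_le (k : ℕ) :
    ∃ K : ℝ, 1 ≤ K ∧ ∀ α β : ℝ, α < β → ∀ p : ℝ[X], p.natDegree ≤ k →
      ∀ M, (∀ x ∈ Icc α β, |p.eval x| ≤ M) →
        ∀ x ∈ Icc α β, ∀ y ∈ Icc α β, |p.eval x - p.eval y| ≤ K * M / (β - α) * |x - y| := by
  obtain ⟨K, hderiv⟩ := exists_abs_eval_derivative_le k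
  refine ⟨max 1 K, le_max_left _ _, fun α β hαβ p hp M hM x hx y hy => ?_⟩
  have hM0 : 0 ≤ M := (abs_nonneg _).trans (hM x hx)
  have : 0 ≤ β - α := (sub_pos.mpr hαβ).le
  refine (convex_Icc α β).norm_image_sub_le_of_norm_deriv_le (fun z _ => p.differentiableAt)
    (fun z hz => ?_) hy hx
  calc ‖deriv (fun z => p.eval z) z‖ = |p.derivative.eval z| := by simp
    _ ≤ K * M / (β - α) := hderiv α β hαβ p hp M hM z hz
    _ ≤ max 1 K * M / (β - α) := by gcongr; exact le_max_right 1 K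

end Markov

section Kernel

open Function ProbabilityTheory

variable {X : Type*} [MeasurableSpace X] {μ : Measure X} [SFinite μ]

lemma integral_integral_mono_of_nonneg {Y : Type*} [MeasurableSpace Y] {ν : Measure Y} [SFinite ν]
    {f g : X → Y → ℝ} (hf : ∀ x y, 0 ≤ f x y) (hg : Integrable (uncurry g) (μ.prod ν))
    (hfg : ∀ᵐ x ∂μ, ∀ᵐ y ∂ν, f x y ≤ g x y) :
    ∫ x, ∫ y, f x y ∂ν ∂μ ≤ ∫ x, ∫ y, g x y ∂ν ∂μ := by
  refine integral_mono_of_nonneg (ae_of_all _ fun x => integral_nonneg (hf x))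
    hg.integral_prod_left ?_
  filter_upwards [hfg, hg.prod_right_ae] with x hx hgx
  exact integral_mono_of_nonneg (ae_of_all _ (hf x)) hgx hx

variable {k : X → X → ℝ} {q : X → ℝ} {A : ℝ}

lemma integrable_mul_kernel (hq : Integrable q μ)
    (hkm : AEStronglyMeasurable (uncurry k) (μ.prod μ)) (hk : ∀ x y, 0 ≤ k x y)
    (hki : ∀ x, Integrable (k x) μ) (hkA : ∀ x, ∫ y, k x y ∂μ ≤ A) :
    Integrable (fun z : X × X => q z.1 * k z.1 z.2) (μ.prod μ) := by
  have hm : AEStronglyMeasurable (fun z : X × X => q z.1 * k z.1 z.2) (μ.prod μ) :=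
    hq.1.comp_fst.mul hkm
  refine (integrable_prod_iff hm).mpr ⟨ae_of_all _ fun x => (hki x).const_mul (q x), ?_⟩
  refine (hq.norm.mul_const A).mono' hm.norm.integral_prod_right' (ae_of_all _ fun x => ?_)
  have hnorm : ∀ y, ‖q x * k x y‖ = ‖q x‖ * k x y := fun y => by
    rw [norm_mul, Real.norm_of_nonneg (hk x y)]
  simp only [hnorm, integral_const_mul]
  rw [Real.norm_of_nonneg (mul_nonneg (norm_nonneg _) (integral_nonneg (hk x)))]
  exact mul_le_mul_of_nonneg_left (hkA x) (norm_nonneg _)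

lemma integral_integral_le_of_le_add_mul_kernel {f : X → X → ℝ} (hq : Integrable q μ)
    (hq0 : ∀ x, 0 ≤ q x) (hkm : AEStronglyMeasurable (uncurry k) (μ.prod μ))
    (hk : ∀ x y, 0 ≤ k x y) (hsymm : ∀ x y, k x y = k y x) (hki : ∀ x, Integrable (k x) μ)
    (hkA : ∀ x, ∫ y, k x y ∂μ ≤ A) (hf : ∀ x y, 0 ≤ f x y)
    (hfk : ∀ᵐ x ∂μ, ∀ᵐ y ∂μ, f x y ≤ (q x + q y) * k x y) :
    ∫ x, ∫ y, f x y ∂μ ∂μ ≤ 2 * A * ∫ x, q x ∂μ := by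
  let F : X × X → ℝ := fun z => q z.1 * k z.1 z.2
  have hF : Integrable F (μ.prod μ) := integrable_mul_kernel hq hkm hk hki hkA
  have hsplit : uncurry (fun x y => (q x + q y) * k x y) = F + F ∘ Prod.swap := by
    ext ⟨x, y⟩
    simp [F, add_mul, hsymm y x]
  have hsum : Integrable (uncurry fun x y => (q x + q y) * k x y) (μ.prod μ) :=
    hsplit ▸ hF.add hF.swap
  calc ∫ x, ∫ y, f x y ∂μ ∂μ
      ≤ ∫ x, ∫ y, (q x + q y) * k x y ∂μ ∂μ := integral_integral_mono_of_nonneg hf hsum hfk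
    _ = ∫ z, (F + F ∘ Prod.swap) z ∂μ.prod μ := by rw [← hsplit]; exact (integral_prod _ hsum).symm
    _ = 2 * ∫ z, F z ∂μ.prod μ := by
      rw [integral_add' hF hF.swap, two_mul]
      exact congrArg _ (integral_prod_swap F)
    _ = 2 * ∫ x, q x * ∫ y, k x y ∂μ ∂μ := by
      simp only [integral_prod _ hF, F, integral_const_mul]
    _ ≤ 2 * ∫ x, q x * A ∂μ := by
      gcongr 2 * ?_
      refine integral_mono_of_nonneg ?_ (hq.mul_const A) ?_
      · exact ae_of_all _ fun x => mul_nonneg (hq0 x) (integral_nonneg (hk x))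
      · exact ae_of_all _ fun x => mul_le_mul_of_nonneg_left (hkA x) (hq0 x)
    _ = 2 * A * ∫ x, q x ∂μ := by rw [integral_mul_const]; ring

end Kernel

section CauchyKernel

open ProbabilityTheory
open scoped NNReal

lemma inv_sub_sq_add_sq_eq_mul_cauchyPDFReal {γ : ℝ≥0} (hγ : γ ≠ 0) (s t : ℝ) :
    ((s - t) ^ 2 + (γ : ℝ) ^ 2)⁻¹ = Real.pi / γ * cauchyPDFReal s γ t := by
  rw [cauchyPDFReal_def, sub_sq_comm]
  field_simp

lemma integrable_inv_sub_sq_add_sq (s : ℝ) {δ : ℝ} (hδ : 0 < δ) :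
    Integrable fun t => ((s - t) ^ 2 + δ ^ 2)⁻¹ := by
  lift δ to ℝ≥0 using hδ.le
  simp only [inv_sub_sq_add_sq_eq_mul_cauchyPDFReal (NNReal.coe_pos.mp hδ).ne']
  exact (integrable_cauchyPDFReal s).const_mul _

lemma integral_inv_sub_sq_add_sq (s : ℝ) {δ : ℝ} (hδ : 0 < δ) :
    ∫ t, ((s - t) ^ 2 + δ ^ 2)⁻¹ = Real.pi / δ := by
  lift δ to ℝ≥0 using hδ.le
  have hδ' : δ ≠ 0 := (NNReal.coe_pos.mp hδ).ne'
  simp only [inv_sub_sq_add_sq_eq_mul_cauchyPDFReal hδ', integral_const_mul,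
    integral_cauchyPDFReal_eq_one s hδ', mul_one]

end CauchyKernel

section StepFunction

/-- The step function equal to `c i` on the `i`-th element of the mesh `ξ 0 < ⋯ < ξ r`. The elements
are taken half-open so that they cover `(ξ 0, ξ r]`; outside of it, the value is `0`. -/
noncomputable def stepFun (ξ : ℕ → ℝ) (r : ℕ) (c : ℕ → ℝ) (s : ℝ) : ℝ :=
  ∑ i ∈ Finset.range r, (Ioc (ξ i) (ξ (i + 1))).indicator (fun _ => c i) s

lemma integrable_indicator_Ioc_const (a b c : ℝ) : Integrable ((Ioc a b).indicator fun _ => c) :=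
  (integrable_indicator_iff measurableSet_Ioc).mpr (integrableOn_const (by simp))

variable {ξ : ℕ → ℝ} {r : ℕ} {c : ℕ → ℝ}

lemma stepFun_nonneg (hc : ∀ i, 0 ≤ c i) (s : ℝ) : 0 ≤ stepFun ξ r c s :=
  Finset.sum_nonneg fun i _ => indicator_nonneg (fun _ _ => hc i) s

lemma le_stepFun (hc : ∀ i, 0 ≤ c i) {i : ℕ} (hi : i < r) {s : ℝ}
    (hs : s ∈ Ioc (ξ i) (ξ (i + 1))) : c i ≤ stepFun ξ r c s :=
  calc c i = (Ioc (ξ i) (ξ (i + 1))).indicator (fun _ => c i) s :=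
        (indicator_of_mem hs fun _ => c i).symm
    _ ≤ stepFun ξ r c s :=
        Finset.single_le_sum
          (f := fun j => (Ioc (ξ j) (ξ (j + 1))).indicator (fun _ => c j) s)
          (fun j _ => indicator_nonneg (fun _ _ => hc j) s) (Finset.mem_range.mpr hi)

lemma integrable_stepFun : Integrable (stepFun ξ r c) :=
  integrable_finsetSum _ fun _ _ => integrable_indicator_Ioc_const _ _ _

lemma integral_stepFun (hξ : ∀ i < r, ξ i ≤ ξ (i + 1)) :
    ∫ s, stepFun ξ r c s = ∑ i ∈ Finset.range r, (ξ (i + 1) - ξ i) * c i := by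
  simp only [stepFun]
  rw [integral_finsetSum _ fun _ _ => integrable_indicator_Ioc_const _ _ _]
  refine Finset.sum_congr rfl fun i hi => ?_
  rw [integral_indicator measurableSet_Ioc, setIntegral_const, smul_eq_mul,
    Real.volume_real_Ioc_of_le (hξ i (Finset.mem_range.mp hi))]

lemma setIntegral_stepFun_le {ℓ : ℝ} (hc : ∀ i, 0 ≤ c i) (hξ : ∀ i < r, ξ i ≤ ξ (i + 1))
    (hℓ : ∀ i < r, ξ (i + 1) - ξ i ≤ ℓ) (S : Set ℝ) :
    ∫ s in S, stepFun ξ r c s ≤ ℓ * ∑ i ∈ Finset.range r, c i :=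
  calc ∫ s in S, stepFun ξ r c s ≤ ∫ s, stepFun ξ r c s :=
        setIntegral_le_integral integrable_stepFun (ae_of_all _ (stepFun_nonneg hc))
    _ = ∑ i ∈ Finset.range r, (ξ (i + 1) - ξ i) * c i := integral_stepFun hξ
    _ ≤ ∑ i ∈ Finset.range r, ℓ * c i := Finset.sum_le_sum fun i hi =>
        mul_le_mul_of_nonneg_right (hℓ i (Finset.mem_range.mp hi)) (hc i)
    _ = ℓ * ∑ i ∈ Finset.range r, c i := (Finset.mul_sum _ _ _).symm

lemma exists_mem_Ioc_of_mem_Ioc {α : Type*} [LinearOrder α] {ξ : ℕ → α} {s : α} :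
    ∀ {r : ℕ}, s ∈ Ioc (ξ 0) (ξ r) → ∃ i < r, s ∈ Ioc (ξ i) (ξ (i + 1))
  | 0, hs => absurd hs (by simp)
  | r + 1, hs => by
    rcases le_or_gt s (ξ r) with hsr | hsr
    · obtain ⟨i, hi, hsi⟩ := exists_mem_Ioc_of_mem_Ioc ⟨hs.1, hsr⟩
      exact ⟨i, hi.trans r.lt_succ_self, hsi⟩
    · exact ⟨r, r.lt_succ_self, hsr, hs.2⟩

end StepFunction

lemma sq_div_sq_le_of_abs_le {x A u δ : ℝ} (hδ : 0 < δ) (hA : |x| ≤ A) (hAu : |x| ≤ A * (|u| / δ)) :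
    x ^ 2 / u ^ 2 ≤ 2 * A ^ 2 / (u ^ 2 + δ ^ 2) := by
  rcases eq_or_ne u 0 with rfl | hu
  · simp only [ne_eq, OfNat.ofNat_ne_zero, not_false_eq_true, zero_pow, div_zero]
    positivity
  have hfar : x ^ 2 ≤ A ^ 2 := sq_le_sq' (neg_le_of_abs_le hA) (le_of_abs_le hA)
  have hnear : (x * δ) ^ 2 ≤ (A * u) ^ 2 := by
    rw [sq_le_sq, abs_mul, abs_mul, abs_of_pos hδ, ← le_div_iff₀ hδ]
    refine hAu.trans ?_
    rw [← mul_div_assoc]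
    gcongr
    exact le_abs_self A
  rw [div_le_div_iff₀ (by positivity) (by positivity)]
  nlinarith [mul_le_mul_of_nonneg_right hfar (sq_nonneg u)]

lemma sq_div_le_of_abs_le {x A d δ : ℝ} (hd : 0 < d) (hA : |x| ≤ A) (hAd : |x| ≤ A * (d / δ)) :
    x ^ 2 / d ≤ A ^ 2 / δ := by
  rw [div_le_iff₀ hd]
  calc x ^ 2 = |x| * |x| := by rw [← sq, sq_abs]
    _ ≤ A * (A * (d / δ)) := mul_le_mul hA hAd (abs_nonneg x) ((abs_nonneg x).trans hA)
    _ = A ^ 2 / δ * d := by ring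

/-- The square of the `H^{1/2}_{00}` norm of `w` on `(a, b)`. Both terms are Bochner integrals, so a
divergent one counts as `0`. -/
noncomputable def hHalf00NormSq (w : ℝ → ℝ) (a b : ℝ) : ℝ :=
  (∫ s in Ioo a b, ∫ t in Ioo a b, (w s - w t) ^ 2 / (s - t) ^ 2) +
    ∫ s in Ioo a b, w s ^ 2 / min (s - a) (b - s)

/-- The inverse estimate at scale `δ` for a function `w` on the mesh `ξ 0 < ⋯ < ξ r`: on the `i`-th
closed element `w` is bounded by `m i` and Lipschitz with constant `m i / δ`, and no element is
shorter than `δ`. For piecewise polynomials it holds with `δ` comparable to the smallest element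
length. -/
structure InverseEstimate (ξ : ℕ → ℝ) (r : ℕ) (δ : ℝ) (m : ℕ → ℝ) (w : ℝ → ℝ) : Prop where
  pos : 0 < δ
  le_length : ∀ i < r, δ ≤ ξ (i + 1) - ξ i
  abs_apply_le : ∀ i < r, ∀ s ∈ Icc (ξ i) (ξ (i + 1)), |w s| ≤ m i
  abs_apply_sub_le : ∀ i < r, ∀ s ∈ Icc (ξ i) (ξ (i + 1)), ∀ t ∈ Icc (ξ i) (ξ (i + 1)),
    |w s - w t| ≤ m i * (|s - t| / δ)

namespace InverseEstimate

variable {ξ : ℕ → ℝ} {r : ℕ} {δ : ℝ} {m : ℕ → ℝ} {w : ℝ → ℝ} {i j : ℕ} {s t : ℝ}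

lemma node_lt (H : InverseEstimate ξ r δ m w) (hi : i < r) : ξ i < ξ (i + 1) :=
  sub_pos.mp (H.pos.trans_le (H.le_length i hi))

lemma monotoneOn (H : InverseEstimate ξ r δ m w) : MonotoneOn ξ (Iic r) :=
  monotoneOn_of_le_add_one ordConnected_Iic fun _ _ _ hi => (H.node_lt hi).le

lemma nonneg (H : InverseEstimate ξ r δ m w) (hi : i < r) : 0 ≤ m i :=
  (abs_nonneg _).trans (H.abs_apply_le i hi _ (left_mem_Icc.mpr (H.node_lt hi).le))

lemma le_abs_sub_node (H : InverseEstimate ξ r δ m w) (hi : i < r)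
    (hs : s ∈ Icc (ξ i) (ξ (i + 1))) (hj : j ≤ r) (hji : j ≠ i) (hji' : j ≠ i + 1) :
    δ ≤ |s - ξ j| := by
  rcases hji.lt_or_gt with hlt | hgt
  · have hlen := H.le_length j (by omega)
    have hmono : ξ (j + 1) ≤ ξ i := H.monotoneOn (mem_Iic.mpr (by omega)) hi.le hlt
    exact le_abs.mpr (.inl (by linarith [hs.1]))
  · have hlen := H.le_length (i + 1) (by omega)
    have hmono : ξ (i + 1 + 1) ≤ ξ j := H.monotoneOn (mem_Iic.mpr (by omega)) hj (by omega)
    exact le_abs.mpr (.inr (by linarith [hs.2]))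

lemma abs_apply_le_of_apply_node_eq_zero (H : InverseEstimate ξ r δ m w) (hi : i < r)
    (hs : s ∈ Icc (ξ i) (ξ (i + 1))) (hj : j ≤ r) (hw : w (ξ j) = 0) :
    |w s| ≤ m i * (|s - ξ j| / δ) := by
  by_cases hnode : ξ j ∈ Icc (ξ i) (ξ (i + 1))
  · simpa [hw] using H.abs_apply_sub_le i hi s hs (ξ j) hnode
  have hfar : δ ≤ |s - ξ j| := by
    refine H.le_abs_sub_node hi hs hj ?_ ?_ <;> rintro rfl
    · exact hnode (left_mem_Icc.mpr (H.node_lt hi).le)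
    · exact hnode (right_mem_Icc.mpr (H.node_lt hi).le)
  exact (H.abs_apply_le i hi s hs).trans
    (le_mul_of_one_le_right (H.nonneg hi) ((one_le_div H.pos).mpr hfar))

lemma abs_apply_sub_le_add (H : InverseEstimate ξ r δ m w) (hi : i < r)
    (hs : s ∈ Icc (ξ i) (ξ (i + 1))) (hj : j < r) (ht : t ∈ Icc (ξ j) (ξ (j + 1))) :
    |w s - w t| ≤ m i + m j :=
  (abs_sub _ _).trans (add_le_add (H.abs_apply_le i hi s hs) (H.abs_apply_le j hj t ht))

lemma abs_apply_sub_le_of_adjacent (H : InverseEstimate ξ r δ m w) (hi : i + 1 < r)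
    (hs : s ∈ Icc (ξ i) (ξ (i + 1))) (ht : t ∈ Icc (ξ (i + 1)) (ξ (i + 1 + 1))) :
    |w s - w t| ≤ (m i + m (i + 1)) * (|s - t| / δ) := by
  have hi' : i < r := i.lt_succ_self.trans hi
  have hleft := H.abs_apply_sub_le i hi' s hs _ (right_mem_Icc.mpr (H.node_lt hi').le)
  have hright := H.abs_apply_sub_le (i + 1) hi _ (left_mem_Icc.mpr (H.node_lt hi).le) t ht
  have hmem : ξ (i + 1) ∈ uIcc s t := Icc_subset_uIcc ⟨hs.2, ht.1⟩
  have hsx : |s - ξ (i + 1)| ≤ |s - t| := Real.dist_left_le_of_mem_uIcc hmem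
  have hxt : |ξ (i + 1) - t| ≤ |s - t| := Real.dist_right_le_of_mem_uIcc hmem
  have hδ := H.pos
  have hmi := H.nonneg hi'
  have hmj := H.nonneg hi
  calc |w s - w t| ≤ |w s - w (ξ (i + 1))| + |w (ξ (i + 1)) - w t| := abs_sub_le _ _ _
    _ ≤ m i * (|s - ξ (i + 1)| / δ) + m (i + 1) * (|ξ (i + 1) - t| / δ) := add_le_add hleft hright
    _ ≤ m i * (|s - t| / δ) + m (i + 1) * (|s - t| / δ) := by gcongr
    _ = (m i + m (i + 1)) * (|s - t| / δ) := by ring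

lemma abs_apply_sub_le_add_mul (H : InverseEstimate ξ r δ m w) (hi : i < r)
    (hs : s ∈ Icc (ξ i) (ξ (i + 1))) (hj : j < r) (ht : t ∈ Icc (ξ j) (ξ (j + 1))) :
    |w s - w t| ≤ (m i + m j) * (|s - t| / δ) := by
  wlog hij : i ≤ j generalizing i j s t
  · simpa only [abs_sub_comm, add_comm] using this hj ht hi hs (le_of_not_ge hij)
  have hmi := H.nonneg hi
  have hmj := H.nonneg hj
  have hδ := H.pos
  rcases hij.eq_or_lt with rfl | hlt
  · refine (H.abs_apply_sub_le i hi s hs t ht).trans ?_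
    gcongr
    linarith
  rcases eq_or_ne j (i + 1) with rfl | hne
  · exact H.abs_apply_sub_le_of_adjacent hj hs ht
  have hst : δ ≤ |s - t| := by
    have hnode := H.le_abs_sub_node hi hs hj.le hlt.ne' hne
    have hmono : ξ (i + 1) ≤ ξ j := H.monotoneOn (mem_Iic.mpr (by omega)) hj.le hlt
    rw [abs_sub_comm, abs_of_nonneg (by linarith [hs.2])] at hnode
    exact le_abs.mpr (.inr (by linarith [ht.1]))
  exact (H.abs_apply_sub_le_add hi hs hj ht).trans
    (le_mul_of_one_le_right (add_nonneg hmi hmj) ((one_le_div hδ).mpr hst))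

lemma sq_sub_div_sq_le (H : InverseEstimate ξ r δ m w) (hs : s ∈ Ioo (ξ 0) (ξ r))
    (ht : t ∈ Ioo (ξ 0) (ξ r)) :
    (w s - w t) ^ 2 / (s - t) ^ 2 ≤
      (4 * stepFun ξ r (m ^ 2) s + 4 * stepFun ξ r (m ^ 2) t) * ((s - t) ^ 2 + δ ^ 2)⁻¹ := by
  obtain ⟨i, hi, hsi⟩ := exists_mem_Ioc_of_mem_Ioc (Ioo_subset_Ioc_self hs)
  obtain ⟨j, hj, htj⟩ := exists_mem_Ioc_of_mem_Ioc (Ioo_subset_Ioc_self ht)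
  have hms : m i ^ 2 ≤ stepFun ξ r (m ^ 2) s := le_stepFun (fun _ => sq_nonneg _) hi hsi
  have hmt : m j ^ 2 ≤ stepFun ξ r (m ^ 2) t := le_stepFun (fun _ => sq_nonneg _) hj htj
  have hsi' := Ioc_subset_Icc_self hsi
  have htj' := Ioc_subset_Icc_self htj
  calc (w s - w t) ^ 2 / (s - t) ^ 2
      ≤ 2 * (m i + m j) ^ 2 / ((s - t) ^ 2 + δ ^ 2) :=
        sq_div_sq_le_of_abs_le H.pos (H.abs_apply_sub_le_add hi hsi' hj htj')
          (H.abs_apply_sub_le_add_mul hi hsi' hj htj')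
    _ ≤ (4 * stepFun ξ r (m ^ 2) s + 4 * stepFun ξ r (m ^ 2) t) / ((s - t) ^ 2 + δ ^ 2) := by
        gcongr
        linarith [add_sq_le (a := m i) (b := m j)]
    _ = _ := div_eq_mul_inv _ _

lemma sq_div_abs_sub_node_le (H : InverseEstimate ξ r δ m w) (hs : s ∈ Ioo (ξ 0) (ξ r))
    (hj : j ≤ r) (hw : w (ξ j) = 0) (hsj : s ≠ ξ j) :
    w s ^ 2 / |s - ξ j| ≤ stepFun ξ r (m ^ 2) s / δ := by
  obtain ⟨i, hi, hsi⟩ := exists_mem_Ioc_of_mem_Ioc (Ioo_subset_Ioc_self hs)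
  have hsi' := Ioc_subset_Icc_self hsi
  calc w s ^ 2 / |s - ξ j| ≤ m i ^ 2 / δ :=
        sq_div_le_of_abs_le (abs_pos.mpr (sub_ne_zero.mpr hsj)) (H.abs_apply_le i hi s hsi')
          (H.abs_apply_le_of_apply_node_eq_zero hi hsi' hj hw)
    _ ≤ stepFun ξ r (m ^ 2) s / δ :=
        div_le_div_of_nonneg_right (le_stepFun (fun _ => sq_nonneg _) hi hsi) H.pos.le

theorem integral_integral_sq_sub_div_sq_le (H : InverseEstimate ξ r δ m w) :
    ∫ s in Ioo (ξ 0) (ξ r), ∫ t in Ioo (ξ 0) (ξ r), (w s - w t) ^ 2 / (s - t) ^ 2 ≤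
      8 * Real.pi / δ * ∫ s in Ioo (ξ 0) (ξ r), stepFun ξ r (m ^ 2) s := by
  have hint := fun s => integrable_inv_sub_sq_add_sq s H.pos
  calc _ ≤ 2 * (Real.pi / δ) * ∫ s in Ioo (ξ 0) (ξ r), 4 * stepFun ξ r (m ^ 2) s := by
        refine integral_integral_le_of_le_add_mul_kernel
          (k := fun s t => ((s - t) ^ 2 + δ ^ 2)⁻¹)
          (integrable_stepFun.integrableOn.const_mul 4)
          (fun s => mul_nonneg zero_le_four (stepFun_nonneg (fun _ => sq_nonneg _) s))
          (by fun_prop) (fun s t => by positivity) (fun s t => by rw [sub_sq_comm])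
          (fun s => (hint s).integrableOn) (fun s => ?_) (fun s t => by positivity) ?_
        · exact (setIntegral_le_integral (hint s) (ae_of_all _ fun t => by positivity)).trans_eq
            (integral_inv_sub_sq_add_sq s H.pos)
        · filter_upwards [ae_restrict_mem measurableSet_Ioo] with s hs
          filter_upwards [ae_restrict_mem measurableSet_Ioo] with t ht
          exact H.sq_sub_div_sq_le hs ht
    _ = _ := by rw [integral_const_mul]; ring

theorem integral_sq_div_min_le (H : InverseEstimate ξ r δ m w) (hleft : w (ξ 0) = 0)
    (hright : w (ξ r) = 0) :
    ∫ s in Ioo (ξ 0) (ξ r), w s ^ 2 / min (s - ξ 0) (ξ r - s) ≤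
      1 / δ * ∫ s in Ioo (ξ 0) (ξ r), stepFun ξ r (m ^ 2) s := by
  rw [← integral_const_mul]
  refine integral_mono_of_nonneg ?_ (integrable_stepFun.integrableOn.const_mul _) ?_ <;>
    filter_upwards [ae_restrict_mem measurableSet_Ioo] with s hs
  · exact div_nonneg (sq_nonneg _) (le_min (sub_pos.mpr hs.1).le (sub_pos.mpr hs.2).le)
  rw [one_div_mul_eq_div]
  rcases min_choice (s - ξ 0) (ξ r - s) with hmin | hmin <;> rw [hmin]
  · simpa only [abs_of_pos (sub_pos.mpr hs.1)] using
      H.sq_div_abs_sub_node_le hs (Nat.zero_le r) hleft hs.1.ne'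
  · simpa only [abs_sub_comm s, abs_of_pos (sub_pos.mpr hs.2)] using
      H.sq_div_abs_sub_node_le hs le_rfl hright hs.2.ne

theorem hHalf00NormSq_le (H : InverseEstimate ξ r δ m w) {ℓ : ℝ}
    (hℓ : ∀ i < r, ξ (i + 1) - ξ i ≤ ℓ) (hleft : w (ξ 0) = 0) (hright : w (ξ r) = 0) :
    hHalf00NormSq w (ξ 0) (ξ r) ≤
      (8 * Real.pi + 1) * (ℓ / δ) * ∑ i ∈ Finset.range r, m i ^ 2 := by
  have hδ := H.pos
  calc _ ≤ 8 * Real.pi / δ * (∫ s in Ioo (ξ 0) (ξ r), stepFun ξ r (m ^ 2) s) +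
        1 / δ * ∫ s in Ioo (ξ 0) (ξ r), stepFun ξ r (m ^ 2) s :=
        add_le_add H.integral_integral_sq_sub_div_sq_le (H.integral_sq_div_min_le hleft hright)
    _ = (8 * Real.pi + 1) / δ * ∫ s in Ioo (ξ 0) (ξ r), stepFun ξ r (m ^ 2) s := by ring
    _ ≤ (8 * Real.pi + 1) / δ * (ℓ * ∑ i ∈ Finset.range r, m i ^ 2) := by
        gcongr
        exact setIntegral_stepFun_le (fun _ => sq_nonneg _) (fun i hi => (H.node_lt hi).le) hℓ _
    _ = _ := by ring

end InverseEstimate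

lemma abs_le_sSup_image_abs_Ioo {w : ℝ → ℝ} {α β : ℝ} (hαβ : α < β)
    (hw : ContinuousOn w (Icc α β)) {s : ℝ} (hs : s ∈ Icc α β) :
    |w s| ≤ sSup ((fun t => |w t|) '' Ioo α β) := by
  have hbdd : BddAbove ((fun t => |w t|) '' Ioo α β) :=
    (isCompact_Icc.bddAbove_image hw.abs).mono (image_mono Ioo_subset_Icc_self)
  have hclosure := closure_Ioo hαβ.ne
  exact le_on_closure (f := fun t => |w t|) (fun t ht => le_csSup hbdd (mem_image_of_mem _ ht))
    (hclosure ▸ hw.abs) continuousOn_const (hclosure ▸ hs)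

theorem exists_inverseEstimate_of_piecewise_polynomial (k : ℕ) :
    ∃ K : ℝ, 1 ≤ K ∧ ∀ (ξ : ℕ → ℝ) (r : ℕ) (δ : ℝ) (w : ℝ → ℝ), 0 < δ →
      (∀ i < r, K * δ ≤ ξ (i + 1) - ξ i) → (∀ i < r, ContinuousOn w (Icc (ξ i) (ξ (i + 1)))) →
      (∀ i < r, ∃ p : Polynomial ℝ, p.natDegree ≤ k ∧
        ∀ t ∈ Ioo (ξ i) (ξ (i + 1)), w t = p.eval t) →
      InverseEstimate ξ r δ (fun i => sSup ((fun t => |w t|) '' Ioo (ξ i) (ξ (i + 1)))) w := by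
  obtain ⟨K, hK, hmarkov⟩ := exists_abs_eval_sub_eval_le k
  refine ⟨K, hK, fun ξ r δ w hδ hlen hcont hpoly => ?_⟩
  have hδK : δ ≤ K * δ := le_mul_of_one_le_left hδ.le hK
  have hlt : ∀ i < r, ξ i < ξ (i + 1) := fun i hi => by linarith [hlen i hi]
  have hsup : ∀ i < r, ∀ s ∈ Icc (ξ i) (ξ (i + 1)),
      |w s| ≤ sSup ((fun t => |w t|) '' Ioo (ξ i) (ξ (i + 1))) := fun i hi s hs =>
    abs_le_sSup_image_abs_Ioo (hlt i hi) (hcont i hi) hs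
  refine ⟨hδ, fun i hi => hδK.trans (hlen i hi), hsup, fun i hi s hs t ht => ?_⟩
  obtain ⟨p, hpdeg, hp⟩ := hpoly i hi
  have hwp : EqOn w (fun t => p.eval t) (Icc (ξ i) (ξ (i + 1))) :=
    EqOn.of_subset_closure hp (hcont i hi) p.continuous.continuousOn Ioo_subset_Icc_self
      (closure_Ioo (hlt i hi).ne).ge
  set M := sSup ((fun t => |w t|) '' Ioo (ξ i) (ξ (i + 1)))
  have hM : 0 ≤ M := (abs_nonneg _).trans (hsup i hi s hs)
  have hpM : ∀ x ∈ Icc (ξ i) (ξ (i + 1)), |p.eval x| ≤ M := fun x hx =>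
    (congrArg _ (hwp hx)).symm.trans_le (hsup i hi x hx)
  calc |w s - w t| = |p.eval s - p.eval t| := by rw [hwp hs, hwp ht]
    _ ≤ K * M / (ξ (i + 1) - ξ i) * |s - t| :=
      hmarkov _ _ (hlt i hi) p hpdeg M hpM s hs t ht
    _ ≤ K * M / (K * δ) * |s - t| := by
      gcongr
      exact hlen i hi
    _ = M * (|s - t| / δ) := by field_simp

/-- For every `cBar ≥ 1` and `k ∈ ℕ` there is `C > 0` (depending only on
`cBar` and `k`) such that for every compact interval `[a,b]`, every quasi-uniform mesh of
`[a,b]` with constant `cBar`, and every continuous piecewise polynomial `w` of degree `≤ k`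
vanishing at the endpoints, the squared `H^{1/2}_{00}` norm
`∫∫ (w(x)-w(y))²/(x-y)² + ∫ w(x)²/ρ(x)` is bounded by `C · Σ_i (sup_{e_i} |w|)²`,
where `ρ(x) = min(x-a, b-x)`. -/
theorem h_half_00_norm_bound (cBar : ℝ) (hc : 1 ≤ cBar) (k : ℕ) :
    ∃ C : ℝ, 0 < C ∧
      ∀ (a b : ℝ) (_hab : a < b) (r : ℕ) (_hr : 0 < r) (ξ : ℕ → ℝ)
        (_h0 : ξ 0 = a) (_hr' : ξ r = b) (_hmono : ∀ i < r, ξ i < ξ (i + 1))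
        -- quasi-uniformity: the ratio of any two element lengths is at most `cBar`
        (_hqu : ∀ i < r, ∀ j < r, ξ (i + 1) - ξ i ≤ cBar * (ξ (j + 1) - ξ j))
        (w : ℝ → ℝ) (_hcont : ContinuousOn w (Icc a b))
        -- `w ∈ 𝕊_k(𝒯)`
        (_hpoly : ∀ i < r, ∃ p : Polynomial ℝ, p.natDegree ≤ k ∧
          ∀ t ∈ Ioo (ξ i) (ξ (i + 1)), w t = p.eval t)
        (_ha : w a = 0) (_hb : w b = 0),
        (∫ s in Ioo a b, ∫ t in Ioo a b, (w s - w t) ^ 2 / (s - t) ^ 2) +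
            (∫ s in Ioo a b, (w s) ^ 2 / min (s - a) (b - s)) ≤
          C * ∑ i ∈ Finset.range r,
              (sSup ((fun t => |w t|) '' Ioo (ξ i) (ξ (i + 1)))) ^ 2 := by
  obtain ⟨K, hK, hinv⟩ := exists_inverseEstimate_of_piecewise_polynomial k
  have hcK : 0 < cBar * K := by positivity
  refine ⟨(8 * Real.pi + 1) * (cBar ^ 2 * K), by positivity, ?_⟩
  rintro _ _ - r hr ξ rfl rfl hmono hqu w hcont hpoly ha hb
  have hlen : 0 < ξ 1 - ξ 0 := sub_pos.mpr (hmono 0 hr)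
  have hscale : K * ((ξ 1 - ξ 0) / (cBar * K)) = (ξ 1 - ξ 0) / cBar := by field_simp
  have hξ : MonotoneOn ξ (Iic r) :=
    monotoneOn_of_le_add_one ordConnected_Iic fun i _ _ hi => (hmono i hi).le
  have H := hinv ξ r ((ξ 1 - ξ 0) / (cBar * K)) w (div_pos hlen hcK)
    (fun i hi => by rw [hscale, div_le_iff₀' (by positivity)]; exact hqu 0 hr i hi)
    (fun i hi => hcont.mono (Icc_subset_Icc (hξ (Nat.zero_le r) hi.le (Nat.zero_le i))
      (hξ hi (mem_Iic.mpr le_rfl) hi))) hpoly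
  calc _ ≤ (8 * Real.pi + 1) * (cBar * (ξ 1 - ξ 0) / ((ξ 1 - ξ 0) / (cBar * K))) * _ :=
        H.hHalf00NormSq_le (fun i hi => hqu i hi 0 hr) ha hb
    _ = _ := by field_simp
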